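/- Let ν ∈ ℂ with Re ν > −1 and let φ ∈ 𝒮⁺. Then for every x > 0 one has 𝓗_ν(ℬ_{2ν+1} φ)(x) = − x² 𝓗_ν(φ)(x), where ℬ_{2ν+1}φ(y) = φ''(y) + ((2ν+1)/y) φ'(y). -/

import Mathlib

open MeasureTheory Filter Set

noncomputable def besselJ (ν : ℂ) (z : ℝ) : ℂ :=
  ∑' k : ℕ, ((-1 : ℂ) ^ k / (Complex.Gamma (k + 1) * Complex.Gamma (ν + k + 1))) *
    ((z : ℂ) / 2) ^ (2 * (k : ℂ) + ν)

noncomputable def hankel (ν : ℂ) (φ : ℝ → ℂ) (x : ℝ) : ℂ :=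
  (x : ℂ) ^ (-ν) * ∫ y in Ioi (0:ℝ), φ y * besselJ ν (x * y) * (y : ℂ) ^ (ν + 1)

noncomputable def DIter : ℕ → (ℝ → ℂ) → (ℝ → ℂ)
  | 0, φ => φ
  | k + 1, φ => fun x => (1 / (x : ℂ)) * deriv (DIter k φ) x

def SPlus (φ : ℝ → ℂ) : Prop :=
  ContDiffOn ℝ (⊤ : ℕ∞) φ (Ioi 0) ∧
  ∀ m k : ℕ, ∃ C : ℝ, ∀ x > (0:ℝ), ‖(x : ℂ) ^ m * DIter k φ x‖ ≤ C

open scoped Topology ContDiff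

/-- The Taylor coefficients of `s ↦ (z / 2) ^ (-ν) * J_ν(z)`, where `s = z ^ 2`. -/
noncomputable def besselCoeff (ν : ℂ) (k : ℕ) : ℂ :=
  (-1 / 4) ^ k / (Complex.Gamma (k + 1) * Complex.Gamma (ν + k + 1))

/-- The entire function with `J_ν(z) = (z / 2) ^ ν * besselEntire ν (z ^ 2)`. -/
noncomputable def besselEntire (ν : ℂ) (s : ℝ) : ℂ :=
  ∑' k : ℕ, besselCoeff ν k * (s : ℂ) ^ k

lemma besselCoeff_succ (ν : ℂ) (k : ℕ) :
    (k + 1) * besselCoeff ν (k + 1) = -1 / 4 * besselCoeff (ν + 1) k := by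
  have hk : (k + 1 : ℂ) ≠ 0 := by exact_mod_cast k.succ_ne_zero
  have hG : Complex.Gamma (k + 1) ≠ 0 := by
    rw [Complex.Gamma_nat_eq_factorial]
    exact_mod_cast k.factorial_ne_zero
  unfold besselCoeff
  push_cast
  rw [Complex.Gamma_add_one _ hk, show ν + (k + 1) + 1 = ν + 1 + k + 1 by ring, pow_succ]
  by_cases h : Complex.Gamma (ν + 1 + k + 1) = 0
  · simp [h]
  · field_simp

lemma besselCoeff_eq_mul_add_one (ν : ℂ) (k : ℕ) :
    besselCoeff ν k = (ν + k + 1) * besselCoeff (ν + 1) k := by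
  have h := Complex.one_div_Gamma_eq_self_mul_one_div_Gamma_add_one (ν + k + 1)
  unfold besselCoeff
  rw [show ν + 1 + k + 1 = ν + k + 1 + 1 by ring, div_eq_mul_inv, mul_inv, h]
  ring

lemma summable_besselCoeff (ν : ℂ) (s : ℂ) :
    Summable fun k : ℕ => besselCoeff ν k * s ^ k := by
  refine summable_of_ratio_norm_eventually_le (r := 1 / 2) (by norm_num) ?_
  obtain ⟨N, hN⟩ := exists_nat_ge (‖ν‖ + ‖s‖ + 1)
  filter_upwards [eventually_ge_atTop N] with k hk
  have hkN : ‖ν‖ + ‖s‖ + 1 ≤ k := hN.trans (by exact_mod_cast hk)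
  have hrec : (ν + k + 1) * ((k + 1) * besselCoeff ν (k + 1)) = -1 / 4 * besselCoeff ν k := by
    rw [besselCoeff_succ, besselCoeff_eq_mul_add_one ν k]; ring
  have hlow : ‖s‖ ≤ ‖ν + k + 1‖ := by
    have h1 : ‖(k + 1 : ℂ)‖ = k + 1 := by
      exact_mod_cast Complex.norm_natCast (k + 1)
    have h2 : ‖(k + 1 : ℂ)‖ ≤ ‖ν + k + 1‖ + ‖ν‖ := by
      calc ‖(k + 1 : ℂ)‖ = ‖(ν + k + 1) - ν‖ := by ring_nf
        _ ≤ _ := norm_sub_le _ _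
    linarith
  have hone : 1 ≤ ‖(k + 1 : ℂ)‖ := by
    have h1 : ‖(k + 1 : ℂ)‖ = k + 1 := by
      exact_mod_cast Complex.norm_natCast (k + 1)
    rw [h1]; linarith [k.cast_nonneg (α := ℝ)]
  have hn := congrArg norm hrec
  simp only [norm_mul] at hn
  have h4 : ‖(-1 / 4 : ℂ)‖ = 1 / 4 := by norm_num
  rw [h4] at hn
  rw [norm_mul, norm_mul, norm_pow, norm_pow, pow_succ]
  have hb := norm_nonneg (besselCoeff ν (k + 1))
  have hmain : ‖s‖ * ‖besselCoeff ν (k + 1)‖ ≤ 1 / 4 * ‖besselCoeff ν k‖ := by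
    rw [← hn]
    gcongr
    nlinarith
  have hp : 0 ≤ ‖s‖ ^ k := by positivity
  nlinarith [mul_le_mul_of_nonneg_left hmain hp, mul_nonneg hp (norm_nonneg (besselCoeff ν k))]

lemma hasDerivAt_besselEntire (ν : ℂ) (s : ℝ) :
    HasDerivAt (besselEntire ν) (-1 / 4 * besselEntire (ν + 1) s) s := by
  have hshift (t : ℂ) (k : ℕ) :
      besselCoeff ν (k + 1) * (((k + 1 : ℕ) : ℂ) * t ^ (k + 1 - 1)) =
        -1 / 4 * (besselCoeff (ν + 1) k * t ^ k) := by
    rw [← mul_assoc (-1 / 4 : ℂ), ← besselCoeff_succ]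
    push_cast [Nat.add_sub_cancel]
    ring
  have hsum (t : ℂ) : Summable fun k : ℕ => besselCoeff ν k * ((k : ℂ) * t ^ (k - 1)) := by
    rw [← summable_nat_add_iff 1]
    simp_rw [hshift]
    exact (summable_besselCoeff (ν + 1) t).mul_left _
  have hmem : s ∈ Metric.ball (0 : ℝ) (|s| + 1) := by simp
  have hd := hasDerivAt_tsum_of_isPreconnected
    (g := fun (k : ℕ) (t : ℝ) => besselCoeff ν k * (t : ℂ) ^ k)
    (g' := fun (k : ℕ) (t : ℝ) => besselCoeff ν k * ((k : ℂ) * (t : ℂ) ^ (k - 1)))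
    (hsum ((|s| + 1 : ℝ) : ℂ)).norm Metric.isOpen_ball
    (convex_ball (0 : ℝ) (|s| + 1)).isPreconnected
    (fun k t _ => ((hasDerivAt_pow k (t : ℂ)).comp_ofReal).const_mul _) (fun k t ht => ?_)
    hmem (summable_besselCoeff ν s) hmem
  · refine HasDerivAt.congr_deriv hd ?_
    rw [(hsum s).tsum_eq_zero_add]
    simp_rw [hshift, tsum_mul_left]
    simp [besselEntire]
  · have ht' : |t| ≤ |s| + 1 := by simpa using (mem_ball_zero_iff.1 ht).le
    simp only [norm_mul, norm_pow, Complex.norm_real, Real.norm_eq_abs]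
    rw [abs_of_nonneg (by positivity : 0 ≤ |s| + 1)]
    gcongr

lemma besselEntire_recurrence (ν : ℂ) (s : ℝ) :
    s * besselEntire (ν + 2) s / 4 - (ν + 1) * besselEntire (ν + 1) s + besselEntire ν s = 0 := by
  have h1 := summable_besselCoeff (ν + 1) s
  have h2 := summable_besselCoeff (ν + 2) s
  have hs : Summable fun k : ℕ => (k : ℂ) * besselCoeff (ν + 1) k * (s : ℂ) ^ k := by
    refine ((summable_besselCoeff ν s).sub (h1.mul_left (ν + 1))).congr fun k => ?_
    rw [besselCoeff_eq_mul_add_one ν]; ring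
  have hA : besselEntire ν s = (ν + 1) * besselEntire (ν + 1) s +
      ∑' k : ℕ, (k : ℂ) * besselCoeff (ν + 1) k * (s : ℂ) ^ k := by
    unfold besselEntire
    rw [← tsum_mul_left, ← (h1.mul_left (ν + 1)).tsum_add hs]
    refine tsum_congr fun k => ?_
    rw [besselCoeff_eq_mul_add_one ν]; ring
  have hB : ∑' k : ℕ, (k : ℂ) * besselCoeff (ν + 1) k * (s : ℂ) ^ k =
      -(s / 4) * besselEntire (ν + 2) s := by
    rw [hs.tsum_eq_zero_add]
    unfold besselEntire
    rw [← tsum_mul_left]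
    simp only [Nat.cast_zero, zero_mul, zero_add]
    refine tsum_congr fun k => ?_
    push_cast
    rw [besselCoeff_succ, show ν + 1 + 1 = ν + 2 by ring]; ring
  rw [hA, hB]; ring

lemma besselJ_eq (ν : ℂ) {z : ℝ} (hz : 0 < z) :
    besselJ ν z = ((z : ℂ) / 2) ^ ν * besselEntire ν (z ^ 2) := by
  have hz' : (z : ℂ) / 2 ≠ 0 := by simp [hz.ne']
  unfold besselJ besselEntire
  rw [← tsum_mul_left]
  refine tsum_congr fun k => ?_
  rw [Complex.cpow_add _ _ hz', show (2 * k : ℂ) = ((2 * k : ℕ) : ℂ) by push_cast; ring,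
    Complex.cpow_natCast, besselCoeff, div_pow, div_pow, pow_mul, pow_mul]
  push_cast
  norm_num
  ring

lemma hasDerivAt_besselEntire_sq (ν : ℂ) (x y : ℝ) :
    HasDerivAt (fun t => besselEntire ν ((x * t) ^ 2))
      (-(x ^ 2 / 2) * y * besselEntire (ν + 1) ((x * y) ^ 2)) y := by
  have h := (hasDerivAt_besselEntire ν ((x * y) ^ 2)).scomp y
    (((hasDerivAt_id y).const_mul x).pow 2)
  refine h.congr_deriv ?_
  simp
  ring

lemma continuous_besselEntire (ν : ℂ) : Continuous (besselEntire ν) :=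
  continuous_iff_continuousAt.2 fun s => (hasDerivAt_besselEntire ν s).continuousAt

/-- The energy `|g|² + |dg/dt|²` of `g(t) = besselEntire ν (t ^ 2)`, divided by `t ^ 2`, decreases. -/
lemma antitoneOn_bessel_energy {ν : ℂ} (hν : -1 < ν.re) :
    AntitoneOn (fun t : ℝ => (‖besselEntire ν (t ^ 2)‖ ^ 2 +
      ‖-(t / 2 : ℂ) * besselEntire (ν + 1) (t ^ 2)‖ ^ 2) / t ^ 2) (Ioi 0) := by
  have hderiv : ∀ t ∈ Ioi (0 : ℝ), HasDerivAt (fun t : ℝ => (‖besselEntire ν (t ^ 2)‖ ^ 2 +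
      ‖-(t / 2 : ℂ) * besselEntire (ν + 1) (t ^ 2)‖ ^ 2) / t ^ 2)
      (-2 * (‖besselEntire ν (t ^ 2)‖ ^ 2 +
        (2 * ν.re + 2) * ‖-(t / 2 : ℂ) * besselEntire (ν + 1) (t ^ 2)‖ ^ 2) / t ^ 3) t := by
    intro t ht
    have ht0 : t ≠ 0 := (ne_of_gt ht)
    have ht0' : (t : ℂ) ≠ 0 := by exact_mod_cast ht0
    set p : ℂ := -(t / 2 : ℂ) * besselEntire (ν + 1) (t ^ 2) with hp
    have hg : HasDerivAt (fun t : ℝ => besselEntire ν (t ^ 2)) p t := by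
      have h := hasDerivAt_besselEntire_sq ν 1 t
      simp only [one_mul] at h
      refine h.congr_deriv ?_
      rw [hp]
      push_cast
      ring
    have hp' : HasDerivAt (fun t : ℝ => -(t / 2 : ℂ) * besselEntire (ν + 1) (t ^ 2))
        (-((2 * ν + 1) / t) * p - besselEntire ν (t ^ 2)) t := by
      have h := hasDerivAt_besselEntire_sq (ν + 1) 1 t
      simp only [one_mul] at h
      have hl : HasDerivAt (fun t : ℝ => -(t / 2 : ℂ)) (-(1 / 2)) t :=
        (((hasDerivAt_id (t : ℂ)).comp_ofReal).div_const 2).neg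
      refine (hl.mul h).congr_deriv ?_
      have hr := besselEntire_recurrence ν (t ^ 2)
      have hr' : besselEntire ν (t ^ 2) = (ν + 1) * besselEntire (ν + 1) (t ^ 2) -
          t ^ 2 * besselEntire (ν + 2) (t ^ 2) / 4 := by
        push_cast at hr
        linear_combination hr
      rw [hr', hp, show ν + 1 + 1 = ν + 2 by ring]
      push_cast
      field_simp
      ring
    have hE := (hg.norm_sq.add hp'.norm_sq).div ((hasDerivAt_id t).pow 2) (by simpa using ht0)
    refine hE.congr_deriv ?_
    have hin : inner ℝ (besselEntire ν (t ^ 2)) p +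
        inner ℝ p (-((2 * ν + 1) / t) * p - besselEntire ν (t ^ 2)) =
        -((2 * ν.re + 1) / t) * ‖p‖ ^ 2 := by
      rw [inner_sub_right, real_inner_comm p, add_sub_cancel, Complex.inner, mul_assoc,
        Complex.mul_conj, Complex.normSq_eq_norm_sq, Complex.re_mul_ofReal,
        Complex.neg_re, Complex.div_ofReal_re]
      simp
    simp only [Pi.add_apply, id]
    rw [← hp, ← mul_add, hin]
    field_simp
    simp
    ring
  refine antitoneOn_of_deriv_nonpos (convex_Ioi 0)
    (fun t ht => (hderiv t ht).continuousAt.continuousWithinAt)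
    (fun t ht => (hderiv t (interior_subset ht)).differentiableAt.differentiableWithinAt)
    fun t ht => ?_
  have ht' : 0 < t := interior_subset ht
  rw [(hderiv t ht').deriv]
  have h2 : 0 ≤ 2 * ν.re + 2 := by linarith
  rw [neg_mul, neg_div]
  exact neg_nonpos.2 (by positivity)

lemma besselEntire_growth {ν : ℂ} (hν : -1 < ν.re) :
    ∃ K : ℝ, 0 ≤ K ∧ ∀ t > (0 : ℝ), ‖besselEntire ν (t ^ 2)‖ ≤ K * (1 + t) ∧
      ‖besselEntire (ν + 1) (t ^ 2)‖ ≤ K * (1 + t) := by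
  obtain ⟨A, hA⟩ := (isCompact_Icc (a := (0 : ℝ)) (b := 1)).exists_bound_of_continuousOn
    (continuous_besselEntire ν).continuousOn
  obtain ⟨B, hB⟩ := (isCompact_Icc (a := (0 : ℝ)) (b := 1)).exists_bound_of_continuousOn
    (continuous_besselEntire (ν + 1)).continuousOn
  set E : ℝ := ‖besselEntire ν (1 ^ 2)‖ ^ 2 +
    ‖-((1 : ℝ) / 2 : ℂ) * besselEntire (ν + 1) (1 ^ 2)‖ ^ 2 with hE
  have hE0 : 0 ≤ E := by positivity
  have hA0 : 0 ≤ A := (norm_nonneg _).trans (hA 0 (by simp))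
  have hB0 : 0 ≤ B := (norm_nonneg _).trans (hB 0 (by simp))
  have hr0 := Real.sqrt_nonneg E
  refine ⟨A + B + 2 * √E, by positivity, fun t ht => ?_⟩
  rcases le_total t 1 with h1 | h1
  · have hm : t ^ 2 ∈ Icc (0 : ℝ) 1 := ⟨by positivity, pow_le_one₀ ht.le h1⟩
    exact ⟨(hA _ hm).trans (by nlinarith), (hB _ hm).trans (by nlinarith)⟩
  · have hanti := antitoneOn_bessel_energy hν (mem_Ioi.2 one_pos) (mem_Ioi.2 ht) h1
    simp only at hanti
    rw [← hE, one_pow, div_one, div_le_iff₀ (by positivity)] at hanti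
    have key : ∀ r : ℝ, r ^ 2 ≤ E * t ^ 2 → r ≤ √E * t := fun r hr =>
      abs_le_of_sq_le_sq' (by rwa [mul_pow, Real.sq_sqrt hE0]) (by positivity) |>.2
    have hg := key ‖besselEntire ν (t ^ 2)‖ (by
      nlinarith [sq_nonneg (‖-(t / 2 : ℂ) * besselEntire (ν + 1) (t ^ 2)‖)])
    have hp := key ‖-(t / 2 : ℂ) * besselEntire (ν + 1) (t ^ 2)‖
      (by nlinarith [sq_nonneg (‖besselEntire ν (t ^ 2)‖)])
    refine ⟨by nlinarith, ?_⟩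
    rw [norm_mul, norm_neg, norm_div, Complex.norm_real, Real.norm_of_nonneg ht.le] at hp
    have hp2 : ‖besselEntire (ν + 1) (t ^ 2)‖ ≤ 2 * √E := by
      norm_num at hp
      nlinarith
    nlinarith

/-- Continuous functions on `(0, ∞)`, bounded there together with all their products with powers. -/
def IsRapid (f : ℝ → ℂ) : Prop :=
  ContinuousOn f (Ioi 0) ∧ ∀ m : ℕ, ∃ C : ℝ, ∀ y > (0 : ℝ), y ^ m * ‖f y‖ ≤ C

namespace IsRapid

variable {f g : ℝ → ℂ}

lemma add (hf : IsRapid f) (hg : IsRapid g) : IsRapid fun y => f y + g y := by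
  refine ⟨hf.1.add hg.1, fun m => ?_⟩
  obtain ⟨A, hA⟩ := hf.2 m
  obtain ⟨B, hB⟩ := hg.2 m
  refine ⟨A + B, fun y hy => ?_⟩
  have := mul_le_mul_of_nonneg_left (norm_add_le (f y) (g y)) (pow_pos hy m).le
  linarith [hA y hy, hB y hy]

lemma mul_of_le (hf : IsRapid f) (hg : ContinuousOn g (Ioi 0)) {K : ℝ}
    (hK : ∀ y > (0 : ℝ), ‖g y‖ ≤ K * (1 + y)) : IsRapid fun y => f y * g y := by
  refine ⟨hf.1.mul hg, fun m => ?_⟩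
  obtain ⟨A, hA⟩ := hf.2 m
  obtain ⟨B, hB⟩ := hf.2 (m + 1)
  have hK0 : 0 ≤ K := by
    have := (norm_nonneg _).trans (hK 1 one_pos)
    linarith
  refine ⟨K * (A + B), fun y hy => ?_⟩
  have hp : 0 ≤ y ^ m * ‖f y‖ := mul_nonneg (pow_pos hy m).le (norm_nonneg _)
  calc y ^ m * ‖f y * g y‖ = (y ^ m * ‖f y‖) * ‖g y‖ := by rw [norm_mul]; ring
    _ ≤ (y ^ m * ‖f y‖) * (K * (1 + y)) := mul_le_mul_of_nonneg_left (hK y hy) hp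
    _ = K * (y ^ m * ‖f y‖ + y ^ (m + 1) * ‖f y‖) := by ring
    _ ≤ _ := mul_le_mul_of_nonneg_left (add_le_add (hA y hy) (hB y hy)) hK0

lemma const_mul (hf : IsRapid f) (c : ℂ) : IsRapid fun y => c * f y := by
  simp_rw [mul_comm c]
  refine hf.mul_of_le continuousOn_const (K := ‖c‖) fun y hy => ?_
  nlinarith [norm_nonneg c, mul_nonneg (norm_nonneg c) (le_of_lt hy)]

lemma ofReal_mul (hf : IsRapid f) : IsRapid fun y => (y : ℂ) * f y := by
  simp_rw [mul_comm _ (f _)]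
  refine hf.mul_of_le Complex.continuous_ofReal.continuousOn (K := 1) fun y hy => ?_
  rw [Complex.norm_real, Real.norm_of_nonneg (le_of_lt hy)]
  linarith

lemma norm_cpow_mul_le (hf : IsRapid f) (a : ℂ) (m : ℕ) :
    ∃ C : ℝ, ∀ y > (0 : ℝ), ‖(y : ℂ) ^ a * f y‖ ≤ C * y ^ (a.re - m) := by
  obtain ⟨C, hC⟩ := hf.2 m
  refine ⟨C, fun y hy => ?_⟩
  rw [norm_mul, Complex.norm_cpow_eq_rpow_re_of_pos hy, Real.rpow_sub hy, Real.rpow_natCast,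
    mul_div_assoc', le_div_iff₀ (pow_pos hy m)]
  calc y ^ a.re * ‖f y‖ * y ^ m = (y ^ m * ‖f y‖) * y ^ a.re := by ring
    _ ≤ _ := mul_le_mul_of_nonneg_right (hC y hy) (Real.rpow_nonneg (le_of_lt hy) _)

lemma continuousOn_cpow_mul (hf : IsRapid f) (a : ℂ) :
    ContinuousOn (fun y : ℝ => (y : ℂ) ^ a * f y) (Ioi 0) :=
  ContinuousOn.mul (fun y hy => (Complex.continuousAt_ofReal_cpow_const y a
    (Or.inr (ne_of_gt hy))).continuousWithinAt) hf.1

lemma integrableOn (hf : IsRapid f) {a : ℂ} (ha : -1 < a.re) :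
    IntegrableOn (fun y : ℝ => (y : ℂ) ^ a * f y) (Ioi 0) := by
  have hmeas : AEStronglyMeasurable (fun y : ℝ => (y : ℂ) ^ a * f y) (volume.restrict (Ioi 0)) :=
    (hf.continuousOn_cpow_mul a).aestronglyMeasurable measurableSet_Ioi
  rw [← Ioc_union_Ioi_eq_Ioi (zero_le_one (α := ℝ))]
  refine IntegrableOn.union ?_ ?_
  · obtain ⟨C, hC⟩ := hf.norm_cpow_mul_le a 0
    have hintegral : IntegrableOn (fun y : ℝ => C * y ^ (a.re - (0 : ℕ))) (Ioc 0 1) :=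
      ((intervalIntegrable_iff_integrableOn_Ioc_of_le zero_le_one).1
        (intervalIntegral.intervalIntegrable_rpow' (by simpa using ha))).const_mul C
    refine Integrable.mono' hintegral (hmeas.mono_set Ioc_subset_Ioi_self) ?_
    exact (ae_restrict_mem measurableSet_Ioc).mono fun y hy => hC y hy.1
  · obtain ⟨m, hm⟩ := exists_nat_gt (a.re + 1)
    obtain ⟨C, hC⟩ := hf.norm_cpow_mul_le a m
    have hintegral : IntegrableOn (fun y : ℝ => C * y ^ (a.re - m)) (Ioi 1) :=
      (integrableOn_Ioi_rpow_of_lt (by linarith) one_pos).const_mul C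
    refine Integrable.mono' hintegral (hmeas.mono_set (Ioi_subset_Ioi zero_le_one)) ?_
    exact (ae_restrict_mem measurableSet_Ioi).mono fun y hy => hC y (one_pos.trans hy)

lemma tendsto_atTop (hf : IsRapid f) (a : ℂ) :
    Tendsto (fun y : ℝ => (y : ℂ) ^ a * f y) atTop (𝓝 0) := by
  obtain ⟨m, hm⟩ := exists_nat_gt a.re
  obtain ⟨C, hC⟩ := hf.norm_cpow_mul_le a m
  have hlim : Tendsto (fun y : ℝ => C * y ^ (a.re - m)) atTop (𝓝 0) := by
    have := (tendsto_rpow_neg_atTop (y := m - a.re) (by linarith)).const_mul C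
    simpa using this
  exact squeeze_zero_norm' ((eventually_gt_atTop 0).mono hC) hlim

lemma continuousWithinAt_zero (hf : IsRapid f) {a : ℂ} (ha : 0 < a.re) :
    ContinuousWithinAt (fun y : ℝ => (y : ℂ) ^ a * f y) (Ici 0) 0 := by
  rw [← continuousWithinAt_Ioi_iff_Ici]
  have ha0 : a ≠ 0 := by
    rintro rfl
    simp at ha
  obtain ⟨C, hC⟩ := hf.norm_cpow_mul_le a 0
  have hlim : Tendsto (fun y : ℝ => C * y ^ (a.re - (0 : ℕ))) (𝓝[>] 0) (𝓝 0) := by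
    have h : Tendsto (fun y : ℝ => y ^ a.re) (𝓝[>] 0) (𝓝 ((0 : ℝ) ^ a.re)) :=
      (Real.continuousAt_rpow_const 0 a.re (Or.inr ha.le)).continuousWithinAt
    rw [Real.zero_rpow ha.ne'] at h
    simpa using h.const_mul C
  have : Tendsto (fun y : ℝ => (y : ℂ) ^ a * f y) (𝓝[>] 0) (𝓝 0) :=
    squeeze_zero_norm' (eventually_nhdsWithin_of_forall hC) hlim
  simpa [ContinuousWithinAt, Complex.zero_cpow ha0] using this

end IsRapid

lemma contDiffOn_DIter {φ : ℝ → ℂ} (hφ : ContDiffOn ℝ ∞ φ (Ioi 0)) (k : ℕ) :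
    ContDiffOn ℝ ∞ (DIter k φ) (Ioi 0) := by
  induction k with
  | zero => exact hφ
  | succ k ih =>
    have hinv : ContDiffOn ℝ ∞ (fun x : ℝ => 1 / (x : ℂ)) (Ioi 0) := by
      simp_rw [one_div]
      exact Complex.ofRealCLM.contDiff.contDiffOn.inv fun x hx => by
        simpa using (show (0 : ℝ) < x from hx).ne'
    exact hinv.mul ((contDiffOn_infty_iff_deriv_of_isOpen isOpen_Ioi).1 ih).2

lemma SPlus.isRapid_DIter {φ : ℝ → ℂ} (hφ : SPlus φ) (k : ℕ) : IsRapid (DIter k φ) := by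
  refine ⟨(contDiffOn_DIter hφ.1 k).continuousOn, fun m => ?_⟩
  obtain ⟨C, hC⟩ := hφ.2 m k
  refine ⟨C, fun y hy => ?_⟩
  simpa [abs_of_pos hy] using hC y hy

lemma SPlus.hasDerivAt_DIter {φ : ℝ → ℂ} (hφ : SPlus φ) (k : ℕ) {y : ℝ} (hy : 0 < y) :
    HasDerivAt (DIter k φ) (y * DIter (k + 1) φ y) y := by
  have hd : DifferentiableAt ℝ (DIter k φ) y :=
    ((contDiffOn_DIter hφ.1 k).differentiableOn (by simp)).differentiableAt (Ioi_mem_nhds hy)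
  have hy0 : (y : ℂ) ≠ 0 := by simpa using hy.ne'
  refine hd.hasDerivAt.congr_deriv ?_
  simp only [DIter]
  field_simp

lemma SPlus.bessel_operator_eq {φ : ℝ → ℂ} (hφ : SPlus φ) (ν : ℂ) {y : ℝ} (hy : 0 < y) :
    deriv (deriv φ) y + ((2 * ν + 1) / (y : ℂ)) * deriv φ y =
      (2 * ν + 2) * DIter 1 φ y + y * (y * DIter 2 φ y) := by
  have hy0 : (y : ℂ) ≠ 0 := by simpa using hy.ne'
  have h1 : deriv φ =ᶠ[𝓝 y] fun t => (t : ℂ) * DIter 1 φ t := by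
    filter_upwards [Ioi_mem_nhds hy] with t ht using (hφ.hasDerivAt_DIter 0 ht).deriv
  have h2 := (((hasDerivAt_id (y : ℂ)).comp_ofReal).mul (hφ.hasDerivAt_DIter 1 hy)).deriv
  rw [h1.deriv_eq, h1.self_of_nhds]
  refine (congrArg (· + _) h2).trans ?_
  simp only [id]
  field_simp
  ring

lemma hankel_eq_integral (ν : ℂ) (ψ : ℝ → ℂ) {x : ℝ} (hx : 0 < x) :
    hankel ν ψ x = (x : ℂ) ^ (-ν) * (x / 2 : ℂ) ^ ν *
      ∫ y in Ioi (0 : ℝ), (y : ℂ) ^ (2 * ν + 1) * (ψ y * besselEntire ν ((x * y) ^ 2)) := by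
  unfold hankel
  rw [mul_assoc, ← integral_const_mul ((x / 2 : ℂ) ^ ν)]
  congr 1
  refine setIntegral_congr_fun measurableSet_Ioi fun y hy => ?_
  have hy' : (0 : ℝ) < y := hy
  have hy0 : (y : ℂ) ≠ 0 := by simpa using hy'.ne'
  have hcast : ((x * y : ℝ) : ℂ) / 2 = ((x / 2 : ℝ) : ℂ) * (y : ℂ) := by push_cast; ring
  rw [besselJ_eq ν (mul_pos hx hy'), hcast,
    Complex.mul_cpow_ofReal_nonneg (by positivity) hy'.le,
    show 2 * ν + 1 = ν + (ν + 1) by ring, Complex.cpow_add ν (ν + 1) hy0]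
  push_cast
  ring

/-- The modified Hankel transform diagonalizes the Bessel operator:
`𝓗_ν(ℬ_{2ν+1} φ)(x) = -x² 𝓗_ν(φ)(x)` for `Re ν > -1`, `φ ∈ 𝒮⁺`, `x > 0`. -/
theorem hankel_bessel_operator (ν : ℂ) (hν : -1 < ν.re) (φ : ℝ → ℂ) (hφ : SPlus φ) :
    ∀ x > (0:ℝ),
      hankel ν (fun y => deriv (deriv φ) y + ((2 * ν + 1) / (y : ℂ)) * deriv φ y) x =
        -(x : ℂ) ^ 2 * hankel ν φ x := by
  intro x hx
  have hre : -1 < (2 * ν + 1).re := by simp; linarith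
  have hre' : 0 < (2 * ν + 2).re := by simp; linarith
  have hne : 2 * ν + 2 ≠ 0 := fun h => by simp [h] at hre'
  obtain ⟨K, hK0, hK⟩ := besselEntire_growth hν
  have hbound (y : ℝ) (hy : 0 < y) : K * (1 + x * y) ≤ K * (1 + x) * (1 + y) := by
    nlinarith [mul_nonneg hK0 hx.le, mul_nonneg hK0 hy.le]
  have hcont (μ : ℂ) : ContinuousOn (fun y : ℝ => besselEntire μ ((x * y) ^ 2)) (Ioi 0) :=
    ((continuous_besselEntire μ).comp (by fun_prop)).continuousOn
  have hmul {f : ℝ → ℂ} (hf : IsRapid f) : IsRapid fun y => f y * besselEntire ν ((x * y) ^ 2) :=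
    hf.mul_of_le (hcont ν) fun y hy => (hK _ (mul_pos hx hy)).1.trans (hbound y hy)
  have hmul' {f : ℝ → ℂ} (hf : IsRapid f) :
      IsRapid fun y => f y * besselEntire (ν + 1) ((x * y) ^ 2) :=
    hf.mul_of_le (hcont (ν + 1)) fun y hy => (hK _ (mul_pos hx hy)).2.trans (hbound y hy)
  have hD (k : ℕ) := hφ.isRapid_DIter k
  -- `ℬφ = (2ν + 2) D φ + y² D² φ` with `D = y⁻¹ d/dy`.
  set B : ℝ → ℂ := fun y => (2 * ν + 2) * DIter 1 φ y + y * (y * DIter 2 φ y) with hBdef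
  have hB : IsRapid B := ((hD 1).const_mul _).add (hD 2).ofReal_mul.ofReal_mul
  have hIB := (hmul hB).integrableOn hre
  have hIφ := (hmul (hD 0)).integrableOn hre
  -- `W = D φ · G - φ · D G` is the Wronskian of `φ` and `G(y) = besselEntire ν ((x y)²)` over `y`.
  set W : ℝ → ℂ := fun y => DIter 1 φ y * besselEntire ν ((x * y) ^ 2) +
    (x ^ 2 / 2 : ℂ) * (DIter 0 φ y * besselEntire (ν + 1) ((x * y) ^ 2)) with hWdef
  have hW : IsRapid W := (hmul (hD 1)).add ((hmul' (hD 0)).const_mul _)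
  have hderiv : ∀ y ∈ Ioi (0 : ℝ), HasDerivAt (fun t : ℝ => (t : ℂ) ^ (2 * ν + 2) * W t)
      ((y : ℂ) ^ (2 * ν + 1) * (B y * besselEntire ν ((x * y) ^ 2)) +
        x ^ 2 * ((y : ℂ) ^ (2 * ν + 1) * (DIter 0 φ y * besselEntire ν ((x * y) ^ 2)))) y := by
    intro y hy
    have hy' : (0 : ℝ) < y := hy
    have hy0 : (y : ℂ) ≠ 0 := by simpa using hy'.ne'
    have hpow := hasDerivAt_ofReal_cpow_const hy'.ne' hne
    have hWd := ((hφ.hasDerivAt_DIter 1 hy').mul (hasDerivAt_besselEntire_sq ν x y)).add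
      (((hφ.hasDerivAt_DIter 0 hy').mul
        (hasDerivAt_besselEntire_sq (ν + 1) x y)).const_mul (x ^ 2 / 2 : ℂ))
    refine (hpow.mul hWd).congr_deriv ?_
    have hrec := besselEntire_recurrence ν ((x * y) ^ 2)
    push_cast at hrec
    simp only [hBdef, Pi.add_apply, Pi.mul_apply, zero_add, Nat.reduceAdd]
    have hcpow : (y : ℂ) ^ (2 * ν + 2) = (y : ℂ) ^ (2 * ν + 1) * y := by
      rw [show 2 * ν + 2 = 2 * ν + 1 + 1 by ring, Complex.cpow_add _ _ hy0, Complex.cpow_one]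
    rw [show 2 * ν + 2 - 1 = 2 * ν + 1 by ring, hcpow, show ν + 1 + 1 = ν + 2 by ring]
    linear_combination -(x : ℂ) ^ 2 * (y : ℂ) ^ (2 * ν + 1) * DIter 0 φ y * hrec
  have hintegral := integral_Ioi_of_hasDerivAt_of_tendsto (hW.continuousWithinAt_zero hre') hderiv
    (hIB.add (hIφ.const_mul _)) (hW.tendsto_atTop _)
  rw [integral_add hIB (hIφ.const_mul _), integral_const_mul, Complex.ofReal_zero,
    Complex.zero_cpow hne, zero_mul, sub_zero] at hintegral
  rw [hankel_eq_integral ν _ hx, hankel_eq_integral ν φ hx,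
    setIntegral_congr_fun (g := fun y : ℝ => (y : ℂ) ^ (2 * ν + 1) *
      (B y * besselEntire ν ((x * y) ^ 2))) measurableSet_Ioi
      fun y hy => by simp only [hφ.bessel_operator_eq ν hy, hBdef]]
  simp only [DIter] at hintegral
  linear_combination (x : ℂ) ^ (-ν) * (x / 2 : ℂ) ^ ν * hintegral
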